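/- arXiv:1502.03967 — 3 statements merged into one kernel-verified Lean document; each statement's English description precedes it below -/
import Mathlib

section
/- For any ideals I, J, L of A = K[x₁,…,xₙ] with I proper, β(I, J ∩ L) = β(I, J) ∩ β(I, L). -/
open scoped Classical

noncomputable section

/-- A semigroup order on monomials: a strict total order on exponent vectors (written
additively; the monomial `1` corresponds to `0`) compatible with multiplication. -/
def IsSemigroupOrder {σ : Type*} (lt : (σ →₀ ℕ) → (σ →₀ ℕ) → Prop) : Prop :=
  IsStrictTotalOrder (σ →₀ ℕ) lt ∧ ∀ a b c : σ →₀ ℕ, lt a b → lt (c + a) (c + b)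

/-- The variable `i` is local for the order `lt`, i.e. `x_i < 1`. -/
def IsLocalVar {σ : Type*} (lt : (σ →₀ ℕ) → (σ →₀ ℕ) → Prop) (i : σ) : Prop :=
  lt (Finsupp.single i 1) 0

/-- A control order: a semigroup order under which every monomial divisible by a local
variable is `< 1`. -/
def IsControlOrder {σ : Type*} (lt : (σ →₀ ℕ) → (σ →₀ ℕ) → Prop) : Prop :=
  IsSemigroupOrder lt ∧ ∀ m : σ →₀ ℕ, (∃ i, IsLocalVar lt i ∧ m i ≠ 0) → lt m 0

/-- `m` is the leading monomial of `g` w.r.t. `lt`. -/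
def IsLeadingMonomial {K : Type*} [CommSemiring K] {σ : Type*}
    (lt : (σ →₀ ℕ) → (σ →₀ ℕ) → Prop) (g : MvPolynomial σ K) (m : σ →₀ ℕ) : Prop :=
  m ∈ g.support ∧ ∀ m' ∈ g.support, m' ≠ m → lt m' m

/-- The multiplicative set `S = {1 + g : g = 0 or lt(g) < 1}`. -/
def SDen (K : Type*) [CommSemiring K] {σ : Type*}
    (lt : (σ →₀ ℕ) → (σ →₀ ℕ) → Prop) : Set (MvPolynomial σ K) :=
  {f | ∃ g : MvPolynomial σ K, f = 1 + g ∧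
    (g = 0 ∨ ∃ m, IsLeadingMonomial lt g m ∧ lt m 0)}

/-- `I = ⋂ i ∈ s, Q i` is a minimal primary decomposition: every `Q i` is primary, the
radicals are pairwise distinct, and no component contains the intersection of the others. -/
def MinPrimDecOn {R : Type*} [CommRing R] {ι : Type*} (I : Ideal R) (Q : ι → Ideal R)
    (s : Finset ι) : Prop :=
  I = ⨅ i ∈ s, Q i ∧ (∀ i ∈ s, (Q i).IsPrimary) ∧
    (∀ i ∈ s, ∀ j ∈ s, (Q i).radical = (Q j).radical → i = j) ∧
    ∀ i ∈ s, ¬ (⨅ j ∈ s.erase i, Q j) ≤ Q i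

/-- The extraction determined by the decomposition `Q` (over `s`) and the ideal `J`:
the intersection of those components `Q i` with `Q i + J ≠ A` (which is `⊤` = the whole
ring when there are no such components). -/
def extractionFrom {R : Type*} [CommRing R] {ι : Type*} (J : Ideal R) (Q : ι → Ideal R)
    (s : Finset ι) : Ideal R :=
  ⨅ i ∈ s.filter (fun i => Q i ⊔ J ≠ ⊤), Q i

/-- `B` is the extraction `β(I,J)` of `I` by `J`. -/
def IsExtraction {R : Type*} [CommRing R] (I J B : Ideal R) : Prop :=
  ∃ (k : ℕ) (Q : Fin k → Ideal R), MinPrimDecOn I Q Finset.univ ∧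
    B = extractionFrom J Q Finset.univ

/-- `t ⊆ s` determines an isolated set of primes of the decomposition `Q` over `s`. -/
def IsIsolatedOn {R : Type*} [CommRing R] {ι : Type*} (Q : ι → Ideal R)
    (s t : Finset ι) : Prop :=
  t ⊆ s ∧ ∀ j ∈ s, (∃ i ∈ t, (Q j).radical ≤ (Q i).radical) → j ∈ t

/-- The lifted ideal `W' = ⟨W, t₁ - g₁, …, t_s - g_s⟩ ⊆ A' = K[x₁,…,xₙ,t₁,…,t_s]`. -/
def liftIdeal {K : Type*} [CommRing K] {n s : ℕ} (g : Fin s → MvPolynomial (Fin n) K)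
    (W : Ideal (MvPolynomial (Fin n) K)) : Ideal (MvPolynomial (Fin n ⊕ Fin s) K) :=
  W.map (MvPolynomial.rename (Sum.inl : Fin n → Fin n ⊕ Fin s)).toRingHom ⊔
    Ideal.span (Set.range fun w : Fin s =>
      (MvPolynomial.X (Sum.inr w) : MvPolynomial (Fin n ⊕ Fin s) K) -
        MvPolynomial.rename (Sum.inl : Fin n → Fin n ⊕ Fin s) (g w))

/-- The substitution homomorphism `φ : A' → A`, fixing each `x_i` and sending `t_w ↦ g_w`. -/
def substHom {K : Type*} [CommRing K] {n s : ℕ} (g : Fin s → MvPolynomial (Fin n) K) :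
    MvPolynomial (Fin n ⊕ Fin s) K →ₐ[K] MvPolynomial (Fin n) K :=
  MvPolynomial.aeval (Sum.elim MvPolynomial.X g)

/-- `β(I, J ∩ L) = β(I, J) ∩ β(I, L)`. -/
theorem stmt_16 {K : Type*} [Field K] {n : ℕ}
    (I J L : Ideal (MvPolynomial (Fin n) K)) (hI : I ≠ ⊤)
    (k : ℕ) (Q : Fin k → Ideal (MvPolynomial (Fin n) K))
    (hQ : MinPrimDecOn I Q Finset.univ) :
    extractionFrom (J ⊓ L) Q Finset.univ =
      extractionFrom J Q Finset.univ ⊓ extractionFrom L Q Finset.univ := by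
  have key : ∀ i, Q i ⊔ (J ⊓ L) = ⊤ ↔ Q i ⊔ J = ⊤ ∧ Q i ⊔ L = ⊤ := by
    intro i
    constructor
    · intro h
      exact ⟨top_le_iff.mp (h ▸ sup_le_sup_left inf_le_left _),
        top_le_iff.mp (h ▸ sup_le_sup_left inf_le_right _)⟩
    · rintro ⟨h1, h2⟩
      have h := (Ideal.isCoprime_iff_sup_eq.mpr h1).mul_right (Ideal.isCoprime_iff_sup_eq.mpr h2)
      have h3 := Ideal.isCoprime_iff_sup_eq.mp h
      exact top_le_iff.mp (h3 ▸ sup_le_sup_left Ideal.mul_le_inf _)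
  unfold extractionFrom
  ext x
  simp only [Submodule.mem_inf, Submodule.mem_iInf, Finset.mem_filter, Finset.mem_univ, true_and,
    ne_eq, key]
  constructor
  · intro h
    exact ⟨fun i hi => h i fun hh => hi hh.1, fun i hi => h i fun hh => hi hh.2⟩
  · rintro ⟨h1, h2⟩ i hi
    by_cases hJ : Q i ⊔ J = ⊤
    · exact h2 i fun hL => hi ⟨hJ, hL⟩
    · exact h1 i hJ
end
end

section
/- For any ideals I, J of A = K[x₁,…,xₙ] with I and J proper, β(I, β(J, I)) = β(I, J). -/
open scoped Classical

noncomputable section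

/-- `β(I, β(J, I)) = β(I, J)`. -/
theorem stmt_17 {K : Type*} [Field K] {n : ℕ}
    (I J : Ideal (MvPolynomial (Fin n) K)) (hI : I ≠ ⊤) (hJ : J ≠ ⊤)
    (k : ℕ) (Q : Fin k → Ideal (MvPolynomial (Fin n) K))
    (hQ : MinPrimDecOn I Q Finset.univ)
    (l : ℕ) (U : Fin l → Ideal (MvPolynomial (Fin n) K))
    (hU : MinPrimDecOn J U Finset.univ) :
    extractionFrom (extractionFrom I U Finset.univ) Q Finset.univ =
      extractionFrom J Q Finset.univ := by
  have key : ∀ i, (Q i ⊔ extractionFrom I U Finset.univ ≠ ⊤) ↔ (Q i ⊔ J ≠ ⊤) := by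
    intro i
    have hIQ : I ≤ Q i := by
      rw [hQ.1]
      exact iInf₂_le i (Finset.mem_univ i)
    have hJle : J ≤ extractionFrom I U Finset.univ := by
      refine le_iInf₂ fun j _ => ?_
      rw [hU.1]
      exact iInf₂_le j (Finset.mem_univ j)
    constructor
    · intro h h'
      exact h (top_le_iff.mp (h' ▸ sup_le_sup_left hJle (Q i)))
    · intro h
      obtain ⟨M, hM, hle⟩ := Ideal.exists_le_maximal _ h
      have hJM : (⨅ j ∈ (Finset.univ : Finset (Fin l)), U j) ≤ M := by
        rw [← hU.1]
        exact le_sup_right.trans hle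
      have hQM : Q i ≤ M := le_sup_left.trans hle
      rw [← Finset.inf_eq_iInf] at hJM
      obtain ⟨j, -, hj⟩ := (Ideal.IsPrime.inf_le' hM.isPrime).mp hJM
      have hB : extractionFrom I U Finset.univ ≤ M := by
        refine le_trans (iInf₂_le j ?_) hj
        simp only [Finset.mem_filter, Finset.mem_univ, true_and]
        intro ht
        exact hM.ne_top (top_le_iff.mp (ht ▸ sup_le hj (hIQ.trans hQM)))
      intro ht
      exact hM.ne_top (top_le_iff.mp (ht ▸ sup_le hQM hB))
  have hf : (Finset.univ.filter (fun i => Q i ⊔ extractionFrom I U Finset.univ ≠ ⊤)) =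
      Finset.univ.filter (fun i => Q i ⊔ J ≠ ⊤) :=
    Finset.filter_congr fun i _ => key i
  rw [extractionFrom, extractionFrom.eq_def J, hf]
end
end

section
/- For any ideals I, J, L of A = K[x₁,…,xₙ] with I proper, β(β(I, J), L) = β(β(I, L), J). -/
open scoped Classical

noncomputable section

theorem mem_extr_aux {R : Type*} [CommRing R] {k : ℕ} (B J : Ideal R) (Q : Fin k → Ideal R)
    (h : MinPrimDecOn B Q Finset.univ) (f : R) :
    f ∈ extractionFrom J Q Finset.univ ↔ ∃ u : R, u - 1 ∈ J ∧ u * f ∈ B := by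
  obtain ⟨hB, hp, -, -⟩ := h
  subst hB
  simp only [extractionFrom, Submodule.mem_iInf, Finset.mem_filter, Finset.mem_univ, true_and,
    forall_true_left]
  constructor
  · intro hf
    have key : ∀ i, ∃ u : R, u - 1 ∈ J ∧ u * f ∈ Q i := by
      intro i
      by_cases hi : Q i ⊔ J = ⊤
      · have h1 : (1 : R) ∈ Q i ⊔ J := by rw [hi]; trivial
        obtain ⟨a, ha, b, hb, hab⟩ := Submodule.mem_sup.1 h1
        refine ⟨a, ?_, (Q i).mul_mem_right _ ha⟩
        have : a - 1 = -b := by rw [← hab]; ring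
        rw [this]
        exact J.neg_mem hb
      · exact ⟨1, by simp, by simpa using hf i hi⟩
    choose u hu1 hu2 using key
    refine ⟨∏ i, u i, ?_, fun i => ?_⟩
    · rw [← Ideal.Quotient.eq, map_prod, map_one]
      apply Finset.prod_eq_one
      intro i _
      rw [← map_one (Ideal.Quotient.mk J), Ideal.Quotient.eq]
      exact hu1 i
    · rw [← Finset.prod_erase_mul _ _ (Finset.mem_univ i), mul_assoc]
      exact (Q i).mul_mem_left _ (hu2 i)
  · rintro ⟨u, hu, huf⟩ i hi
    have h1 := huf i
    rw [mul_comm] at h1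
    rcases (Ideal.isPrimary_iff.1 (hp i (Finset.mem_univ i))).2 h1 with h2 | h2
    · exact h2
    · exfalso
      obtain ⟨m, hm⟩ := h2
      apply hi
      rw [Ideal.eq_top_iff_one]
      have h3 : u ^ m - 1 ∈ J := by
        rw [← Ideal.Quotient.eq] at hu ⊢
        rw [map_pow, hu, map_one, one_pow]
      have h4 : (1 : R) = u ^ m + -(u ^ m - 1) := by ring
      rw [h4]
      exact Submodule.add_mem_sup hm (J.neg_mem h3)

/-- `β(β(I, J), L) = β(β(I, L), J)`. -/
theorem stmt_18 {K : Type*} [Field K] {n : ℕ}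
    (I J L : Ideal (MvPolynomial (Fin n) K)) (hI : I ≠ ⊤)
    (k : ℕ) (Q : Fin k → Ideal (MvPolynomial (Fin n) K))
    (hQ : MinPrimDecOn I Q Finset.univ)
    (l₁ : ℕ) (R₁ : Fin l₁ → Ideal (MvPolynomial (Fin n) K))
    (hR₁ : MinPrimDecOn (extractionFrom J Q Finset.univ) R₁ Finset.univ)
    (l₂ : ℕ) (R₂ : Fin l₂ → Ideal (MvPolynomial (Fin n) K))
    (hR₂ : MinPrimDecOn (extractionFrom L Q Finset.univ) R₂ Finset.univ) :
    extractionFrom L R₁ Finset.univ = extractionFrom J R₂ Finset.univ := by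
  ext f
  rw [mem_extr_aux _ _ _ hR₁, mem_extr_aux _ _ _ hR₂]
  simp only [mem_extr_aux _ _ _ hQ]
  constructor
  · rintro ⟨u, hu, v, hv, h⟩
    exact ⟨v, hv, u, hu, by rwa [mul_left_comm]⟩
  · rintro ⟨u, hu, v, hv, h⟩
    exact ⟨v, hv, u, hu, by rwa [mul_left_comm]⟩
end
end
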